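/- Let Φ be a nonzero Bernstein function on (0,∞) with Φ(0+) = 0, Φ'(0+) = 1, Φ''(0+) > −∞, and lim_{s→∞} Φ(s)/s = 0. Then there exists a function φ : (0,∞) → ℝ that is twice continuously differentiable and strictly convex on (0,∞), with φ(1) = 0, φ'(1) = 0, φ''(1) > 0, and lim_{a→0+} φ'(a) = −∞, such that for every s > 0, Φ(s) = min_{w > 0} { w·s + φ(w) }, the minimum being attained at w = Φ'(s). -/

import Mathlib

open Set Filter Topology

/-- A Bernstein function on `(0,∞)`: smooth, nonnegative, and
`(-1)^(k-1) Φ^(k) ≥ 0` on `(0,∞)` for all `k ≥ 1`. -/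
def IsBernstein (Φ : ℝ → ℝ) : Prop :=
  ContDiffOn ℝ (⊤ : ℕ∞) Φ (Set.Ioi 0) ∧
  (∀ s ∈ Set.Ioi (0:ℝ), 0 ≤ Φ s) ∧
  (∀ k : ℕ, 1 ≤ k → ∀ s ∈ Set.Ioi (0:ℝ), 0 ≤ (-1 : ℝ) ^ (k - 1) * iteratedDeriv k Φ s)

/-!
A nonnegative completely monotone function on `(0,∞)` with a zero vanishes identically: its finite
differences are nonnegative, which prevents it from decreasing to `0` in finite time. Applied to
`-Φ''`, this gives `Φ'' < 0`, since otherwise `Φ'` would be constant, whereas it tends to `1` at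
`0+` and to `lim Φ(s)/s = 0` at infinity. Continuing `Φ` to `s ≤ 0` by its second-order Taylor
polynomial at `0+` yields a `C²` function `P` on the line with `P'' < 0` whose derivative decreases
from `+∞` to `0`. The required `φ` is the Legendre dual of `P`: it satisfies `φ' = -(P')⁻¹`, and
the minimum formula says that the graph of `P` lies below its tangents.
-/

/-- `f` is completely monotone on `(0,∞)`: smooth there, with derivatives alternating in sign
starting from `0 ≤ f`. The values of `f` outside `(0,∞)` are irrelevant. -/
structure IsCompletelyMonotone (f : ℝ → ℝ) : Prop where
  contDiffOn : ContDiffOn ℝ (⊤ : ℕ∞) f (Ioi 0)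
  iteratedDeriv_nonneg : ∀ n : ℕ, ∀ x ∈ Ioi (0 : ℝ), 0 ≤ (-1) ^ n * iteratedDeriv n f x

namespace IsCompletelyMonotone

variable {f : ℝ → ℝ} {x y h : ℝ}

lemma nonneg (hf : IsCompletelyMonotone f) (hx : 0 < x) : 0 ≤ f x := by
  simpa only [pow_zero, one_mul, iteratedDeriv_zero] using hf.iteratedDeriv_nonneg 0 x hx

lemma contDiffAt (hf : IsCompletelyMonotone f) (hx : 0 < x) : ContDiffAt ℝ (⊤ : ℕ∞) f x :=
  hf.contDiffOn.contDiffAt (Ioi_mem_nhds hx)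

lemma differentiableAt (hf : IsCompletelyMonotone f) (hx : 0 < x) : DifferentiableAt ℝ f x :=
  (hf.contDiffAt hx).differentiableAt (by simp)

lemma neg_deriv (hf : IsCompletelyMonotone f) : IsCompletelyMonotone (-deriv f) where
  contDiffOn := ((contDiffOn_infty_iff_deriv_of_isOpen isOpen_Ioi).1 hf.contDiffOn).2.neg
  iteratedDeriv_nonneg n x hx := by
    have hsign := hf.iteratedDeriv_nonneg (n + 1) x hx
    rw [iteratedDeriv_neg, ← iteratedDeriv_succ']
    rwa [pow_succ, mul_neg_one, neg_mul, ← mul_neg] at hsign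

lemma antitoneOn (hf : IsCompletelyMonotone f) : AntitoneOn f (Ioi 0) := by
  refine antitoneOn_of_deriv_nonpos (convex_Ioi 0) hf.contDiffOn.continuousOn ?_ ?_
  · rw [interior_Ioi]
    exact fun x hx ↦ (hf.differentiableAt hx).differentiableWithinAt
  · rw [interior_Ioi]
    exact fun x hx ↦ neg_nonneg.1 (hf.neg_deriv.nonneg hx)

lemma neg_one_pow_mul_iteratedDeriv (hf : IsCompletelyMonotone f) (n : ℕ) :
    IsCompletelyMonotone fun x ↦ (-1) ^ n * iteratedDeriv n f x := by
  induction n with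
  | zero => simpa only [pow_zero, one_mul, iteratedDeriv_zero] using hf
  | succ n ih =>
    convert ih.neg_deriv using 1
    funext x
    rw [Pi.neg_apply, deriv_const_mul_field, iteratedDeriv_succ, pow_succ]
    ring

lemma sub_comp_add_const (hf : IsCompletelyMonotone f) (hh : 0 ≤ h) :
    IsCompletelyMonotone fun x ↦ f x - f (x + h) := by
  have shift_pos {x : ℝ} (hx : x ∈ Ioi 0) : x + h ∈ Ioi 0 := add_pos_of_pos_of_nonneg hx hh
  have shift_contDiffAt {x : ℝ} (hx : x ∈ Ioi 0) :
      ContDiffAt ℝ (⊤ : ℕ∞) (fun x ↦ f (x + h)) x :=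
    (hf.contDiffAt (shift_pos hx)).comp x (contDiffAt_id.add contDiffAt_const)
  refine ⟨fun x hx ↦ ((hf.contDiffAt hx).sub (shift_contDiffAt hx)).contDiffWithinAt,
    fun n x hx ↦ ?_⟩
  rw [iteratedDeriv_fun_sub ((hf.contDiffAt hx).of_le (mod_cast le_top))
    ((shift_contDiffAt hx).of_le (mod_cast le_top)), iteratedDeriv_comp_add_const, mul_sub,
    sub_nonneg]
  exact (hf.neg_one_pow_mul_iteratedDeriv n).antitoneOn hx (shift_pos hx) (by linarith)

lemma eq_zero_of_le (hf : IsCompletelyMonotone f) (hx : 0 < x) (hfx : f x = 0) (hxy : x ≤ y) :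
    f y = 0 :=
  have hy : 0 < y := hx.trans_le hxy
  ((hf.antitoneOn hx hy hxy).trans_eq hfx).antisymm (hf.nonneg hy)

-- The `n`-th finite difference `∑ k, (-1) ^ k * n.choose k * f (x + k * h)` of a completely
-- monotone function is nonnegative, and only its terms `k = 0, 1` survive here.
lemma nsmul_le (hf : IsCompletelyMonotone f) (hx : 0 < x) (hh : 0 < h)
    (hzero : f (x + h + h) = 0) (n : ℕ) : n * f (x + h) ≤ f x := by
  induction n generalizing f with
  | zero => simpa using hf.nonneg hx
  | succ n ih =>
    have hzero' : f (x + h + h + h) = 0 := hf.eq_zero_of_le (by positivity) hzero (by linarith)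
    have hdiff := ih (hf.sub_comp_add_const hh.le) (by rw [hzero, hzero', sub_zero])
    rw [hzero, sub_zero] at hdiff
    push_cast
    linarith

lemma eq_zero_of_add (hf : IsCompletelyMonotone f) (hx : 0 < x) (hh : 0 < h)
    (hzero : f (x + h + h) = 0) : f (x + h) = 0 := by
  refine le_antisymm ?_ (hf.nonneg (by positivity))
  by_contra! hpos
  obtain ⟨n, hn⟩ := exists_lt_nsmul hpos (f x)
  rw [nsmul_eq_mul] at hn
  exact (hf.nsmul_le hx hh hzero n).not_gt hn

theorem eq_zero (hf : IsCompletelyMonotone f) (hx : 0 < x) (hfx : f x = 0) (hy : 0 < y) :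
    f y = 0 := by
  have descend (n : ℕ) (hn : f (y + n * (y / 2)) = 0) : f y = 0 := by
    induction n with
    | zero => simpa using hn
    | succ n ih =>
      have hbase : 0 < y / 2 + n * (y / 2) := by positivity
      convert ih ?_ using 1
      convert hf.eq_zero_of_add hbase (half_pos hy) ?_ using 2
      · ring
      · convert hn using 2
        push_cast
        ring
  obtain ⟨n, hn⟩ := exists_lt_nsmul (half_pos hy) x
  rw [nsmul_eq_mul] at hn
  exact descend n (hf.eq_zero_of_le hx hfx (by linarith))

end IsCompletelyMonotone

lemma le_add_deriv_mul_sub_of_concaveOn {f : ℝ → ℝ} {S : Set ℝ} {x y : ℝ}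
    (hf : ConcaveOn ℝ S f) (hx : x ∈ S) (hy : y ∈ S) (hdiff : DifferentiableAt ℝ f x) :
    f y ≤ f x + deriv f x * (y - x) := by
  rcases lt_trichotomy x y with hxy | rfl | hyx
  · have hslope := hf.slope_le_deriv hx hy hxy hdiff
    rw [slope_def_field, div_le_iff₀ (sub_pos.2 hxy)] at hslope
    linarith
  · simp
  · have hslope := hf.deriv_le_slope hy hx hyx hdiff
    rw [slope_def_field, le_div_iff₀ (sub_pos.2 hyx)] at hslope
    linarith

-- The tangent at `x` lies above the graph at `2 * x` and at `x / 2`, which squeezes `deriv f x`.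
theorem tendsto_deriv_of_concaveOn_of_tendsto_div {f : ℝ → ℝ} {a l : ℝ}
    (hf : ConcaveOn ℝ (Ioi a) f) (hdiff : DifferentiableOn ℝ f (Ioi a))
    (hlim : Tendsto (fun x ↦ f x / x) atTop (𝓝 l)) : Tendsto (deriv f) atTop (𝓝 l) := by
  have hdouble : Tendsto (fun x ↦ f (2 * x) / (2 * x)) atTop (𝓝 l) :=
    hlim.comp (tendsto_id.const_mul_atTop two_pos)
  have hhalf : Tendsto (fun x ↦ f (x / 2) / (x / 2)) atTop (𝓝 l) :=
    hlim.comp (tendsto_id.atTop_div_const two_pos)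
  have hlower : Tendsto (fun x ↦ 2 * (f (2 * x) / (2 * x)) - f x / x) atTop (𝓝 l) := by
    simpa only [two_mul l, add_sub_cancel_right] using (hdouble.const_mul 2).sub hlim
  have hupper : Tendsto (fun x ↦ 2 * (f x / x) - f (x / 2) / (x / 2)) atTop (𝓝 l) := by
    simpa only [two_mul l, add_sub_cancel_right] using (hlim.const_mul 2).sub hhalf
  have htangent {x y : ℝ} (hx : a < x) (hy : a < y) : f y ≤ f x + deriv f x * (y - x) :=
    le_add_deriv_mul_sub_of_concaveOn hf hx hy (hdiff.differentiableAt (Ioi_mem_nhds hx))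
  refine tendsto_of_tendsto_of_tendsto_of_le_of_le' hlower hupper ?_ ?_
  · filter_upwards [eventually_gt_atTop a, eventually_gt_atTop 0] with x hax hx
    have hslope : (f (2 * x) - f x) / x ≤ deriv f x := by
      rw [div_le_iff₀ hx]
      linarith [htangent hax (show a < 2 * x by linarith)]
    calc 2 * (f (2 * x) / (2 * x)) - f x / x = (f (2 * x) - f x) / x := by field_simp
      _ ≤ deriv f x := hslope
  · filter_upwards [eventually_gt_atTop (2 * a), eventually_gt_atTop a, eventually_gt_atTop 0]
      with x h2ax hax hx
    have hslope : deriv f x ≤ (f x - f (x / 2)) / (x / 2) := by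
      rw [le_div_iff₀ (half_pos hx)]
      linarith [htangent hax (show a < x / 2 by linarith)]
    calc deriv f x ≤ (f x - f (x / 2)) / (x / 2) := hslope
      _ = 2 * (f x / x) - f (x / 2) / (x / 2) := by field_simp

namespace IsBernstein

variable {Φ : ℝ → ℝ}

lemma isCompletelyMonotone_deriv (hΦ : IsBernstein Φ) : IsCompletelyMonotone (deriv Φ) where
  contDiffOn := ((contDiffOn_infty_iff_deriv_of_isOpen isOpen_Ioi).1 hΦ.1).2
  iteratedDeriv_nonneg n x hx := by
    simpa only [iteratedDeriv_succ', Nat.add_sub_cancel] using hΦ.2.2 (n + 1) n.succ_pos x hx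

lemma differentiableOn (hΦ : IsBernstein Φ) : DifferentiableOn ℝ Φ (Ioi 0) :=
  hΦ.1.differentiableOn (by simp)

lemma concaveOn (hΦ : IsBernstein Φ) : ConcaveOn ℝ (Ioi 0) Φ := by
  refine AntitoneOn.concaveOn_of_deriv (convex_Ioi 0) hΦ.differentiableOn.continuousOn ?_ ?_ <;>
    rw [interior_Ioi]
  exacts [hΦ.differentiableOn, hΦ.isCompletelyMonotone_deriv.antitoneOn]

lemma deriv_deriv_nonpos (hΦ : IsBernstein Φ) {s : ℝ} (hs : 0 < s) : deriv (deriv Φ) s ≤ 0 :=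
  neg_nonneg.1 (hΦ.isCompletelyMonotone_deriv.neg_deriv.nonneg hs)

lemma deriv_eq_of_deriv_deriv_eq_zero (hΦ : IsBernstein Φ) {s t : ℝ} (hs : 0 < s)
    (hzero : deriv (deriv Φ) s = 0) (ht : 0 < t) : deriv Φ t = deriv Φ s :=
  have hcm := hΦ.isCompletelyMonotone_deriv
  isOpen_Ioi.is_const_of_deriv_eq_zero isPreconnected_Ioi
    (fun _ hu ↦ (hcm.differentiableAt hu).differentiableWithinAt)
    (fun _ hu ↦ neg_eq_zero.1 (hcm.neg_deriv.eq_zero hs (neg_eq_zero.2 hzero) hu)) ht hs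

theorem deriv_deriv_neg (hΦ : IsBernstein Φ) {l m : ℝ}
    (hzero : Tendsto (deriv Φ) (𝓝[>] 0) (𝓝 l)) (htop : Tendsto (fun s ↦ Φ s / s) atTop (𝓝 m))
    (hlm : l ≠ m) {s : ℝ} (hs : 0 < s) : deriv (deriv Φ) s < 0 := by
  refine (hΦ.deriv_deriv_nonpos hs).lt_of_ne fun hdd ↦ hlm ?_
  have hconst : EqOn (fun _ ↦ deriv Φ s) (deriv Φ) (Ioi 0) := fun t ht ↦
    (hΦ.deriv_eq_of_deriv_deriv_eq_zero hs hdd ht).symm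
  have hl : deriv Φ s = l := tendsto_nhds_unique
    (tendsto_const_nhds.congr' (hconst.eventuallyEq_of_mem self_mem_nhdsWithin)) hzero
  have hm : deriv Φ s = m := tendsto_nhds_unique
    (tendsto_const_nhds.congr' (hconst.eventuallyEq_of_mem (Ioi_mem_atTop 0)))
    (tendsto_deriv_of_concaveOn_of_tendsto_div hΦ.concaveOn hΦ.differentiableOn htop)
  exact hl.symm.trans hm

lemma le_deriv_deriv_of_tendsto (hΦ : IsBernstein Φ) {c : ℝ}
    (hc : Tendsto (deriv (deriv Φ)) (𝓝[>] 0) (𝓝 c)) {s : ℝ} (hs : 0 < s) :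
    c ≤ deriv (deriv Φ) s := by
  refine le_of_tendsto hc ?_
  filter_upwards [Ioo_mem_nhdsGT hs] with t ht
  exact neg_le_neg_iff.1 (hΦ.isCompletelyMonotone_deriv.neg_deriv.antitoneOn ht.1 hs ht.2.le)

end IsBernstein

section Gluing

section Order

variable {α E : Type*} [TopologicalSpace α] [LinearOrder α] {a x : α} {f g : α → E}

lemma continuousAt_piecewise_Ioi [TopologicalSpace E] (hg : ContinuousAt g a)
    (hfg : Tendsto f (𝓝[>] a) (𝓝 (g a))) : ContinuousAt ((Ioi a).piecewise f g) a := by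
  have hvalue : (Ioi a).piecewise f g a = g a := piecewise_eq_of_notMem _ _ _ self_notMem_Ioi
  have hleft : g =ᶠ[𝓝[≤] a] (Ioi a).piecewise f g :=
    ((piecewise_eqOn_compl _ f g).eventuallyEq_of_mem
      (by simpa only [compl_Ioi] using self_mem_nhdsWithin)).symm
  have hright : f =ᶠ[𝓝[>] a] (Ioi a).piecewise f g :=
    ((piecewise_eqOn _ f g).eventuallyEq_of_mem self_mem_nhdsWithin).symm
  rw [ContinuousAt, hvalue, ← nhdsLE_sup_nhdsGT]
  exact ((hg.mono_left nhdsWithin_le_nhds).congr' hleft).sup (hfg.congr' hright)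

variable [OrderClosedTopology α]

lemma piecewise_Ioi_eventuallyEq_of_lt (hx : a < x) : (Ioi a).piecewise f g =ᶠ[𝓝 x] f :=
  (piecewise_eqOn _ f g).eventuallyEq_of_mem (Ioi_mem_nhds hx)

lemma piecewise_Ioi_eventuallyEq_of_gt (hx : x < a) : (Ioi a).piecewise f g =ᶠ[𝓝 x] g :=
  (piecewise_eqOn_compl _ f g).eventuallyEq_of_mem <|
    mem_of_superset (Iio_mem_nhds hx) fun _ hy ↦ notMem_Ioi.2 (le_of_lt hy)

end Order

variable {E : Type*} [NormedAddCommGroup E] [NormedSpace ℝ E] {a : ℝ} {f g : ℝ → E}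

lemma hasDerivAt_piecewise_Ioi (hf : DifferentiableOn ℝ f (Ioi a)) (hg : ContDiff ℝ 1 g)
    (hfg : Tendsto f (𝓝[>] a) (𝓝 (g a)))
    (hfg' : Tendsto (deriv f) (𝓝[>] a) (𝓝 (deriv g a))) (x : ℝ) :
    HasDerivAt ((Ioi a).piecewise f g) ((Ioi a).piecewise (deriv f) (deriv g) x) x := by
  have hne (y : ℝ) (hy : y ≠ a) :
      HasDerivAt ((Ioi a).piecewise f g) ((Ioi a).piecewise (deriv f) (deriv g) y) y := by
    rcases hy.lt_or_gt with hlt | hgt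
    · rw [(piecewise_Ioi_eventuallyEq_of_gt hlt).eq_of_nhds]
      exact (hg.differentiable one_ne_zero y).hasDerivAt.congr_of_eventuallyEq
        (piecewise_Ioi_eventuallyEq_of_gt hlt)
    · rw [(piecewise_Ioi_eventuallyEq_of_lt hgt).eq_of_nhds]
      exact (hf.differentiableAt (Ioi_mem_nhds hgt)).hasDerivAt.congr_of_eventuallyEq
        (piecewise_Ioi_eventuallyEq_of_lt hgt)
  rcases eq_or_ne x a with rfl | hx
  · exact hasDerivAt_of_hasDerivAt_of_ne hne
      (continuousAt_piecewise_Ioi hg.continuous.continuousAt hfg)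
      (continuousAt_piecewise_Ioi hg.continuous_deriv_one.continuousAt hfg')
  · exact hne x hx

lemma deriv_piecewise_Ioi (hf : DifferentiableOn ℝ f (Ioi a)) (hg : ContDiff ℝ 1 g)
    (hfg : Tendsto f (𝓝[>] a) (𝓝 (g a)))
    (hfg' : Tendsto (deriv f) (𝓝[>] a) (𝓝 (deriv g a))) :
    deriv ((Ioi a).piecewise f g) = (Ioi a).piecewise (deriv f) (deriv g) :=
  deriv_eq (hasDerivAt_piecewise_Ioi hf hg hfg hfg')

theorem contDiff_piecewise_Ioi {n : ℕ} (hf : ContDiffOn ℝ n f (Ioi a)) (hg : ContDiff ℝ n g)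
    (hfg : ∀ k ≤ n, Tendsto (iteratedDeriv k f) (𝓝[>] a) (𝓝 (iteratedDeriv k g a))) :
    ContDiff ℝ n ((Ioi a).piecewise f g) := by
  have hfg_zero : Tendsto f (𝓝[>] a) (𝓝 (g a)) := by
    simpa only [iteratedDeriv_zero] using hfg 0 n.zero_le
  induction n generalizing f g with
  | zero =>
    refine contDiff_zero.2 (continuous_iff_continuousAt.2 fun x ↦ ?_)
    rcases lt_trichotomy x a with hlt | rfl | hgt
    · exact hg.continuous.continuousAt.congr (piecewise_Ioi_eventuallyEq_of_gt hlt).symm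
    · exact continuousAt_piecewise_Ioi hg.continuous.continuousAt hfg_zero
    · exact (hf.continuousOn.continuousAt (Ioi_mem_nhds hgt)).congr
        (piecewise_Ioi_eventuallyEq_of_lt hgt).symm
  | succ n ih =>
    have hg_one : ContDiff ℝ 1 g := hg.of_le (by norm_cast; lia)
    rw [Nat.cast_succ] at hf hg ⊢
    obtain ⟨hf_diff, -, hf_deriv⟩ := (contDiffOn_succ_iff_deriv_of_isOpen isOpen_Ioi).1 hf
    have hg_deriv : ContDiff ℝ n (deriv g) := (contDiff_succ_iff_deriv.1 hg).2.2
    have hfg_deriv (k : ℕ) (hk : k ≤ n) :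
        Tendsto (iteratedDeriv k (deriv f)) (𝓝[>] a) (𝓝 (iteratedDeriv k (deriv g) a)) := by
      simpa only [iteratedDeriv_succ'] using hfg (k + 1) (Nat.succ_le_succ hk)
    have hfg_one : Tendsto (deriv f) (𝓝[>] a) (𝓝 (deriv g a)) := by
      simpa only [iteratedDeriv_zero] using hfg_deriv 0 n.zero_le
    have hderiv := hasDerivAt_piecewise_Ioi hf_diff hg_one hfg_zero hfg_one
    refine contDiff_succ_iff_deriv.2 ⟨fun x ↦ (hderiv x).differentiableAt, by simp, ?_⟩
    rw [deriv_eq hderiv]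
    exact ih hf_deriv hg_deriv hfg_deriv hfg_one

end Gluing

lemma range_eq_Ioi_of_strictAnti {α β : Type*} [LinearOrder α] [NoMaxOrder α]
    [TopologicalSpace α] [PreconnectedSpace α] [Nonempty α] [LinearOrder β] [TopologicalSpace β]
    [OrderClosedTopology β] {f : α → β} {b : β} (hcont : Continuous f) (hf : StrictAnti f)
    (htop : Tendsto f atTop (𝓝 b)) (hbot : Tendsto f atBot atTop) : range f = Ioi b := by
  refine Subset.antisymm ?_ fun y hy ↦ ?_
  · rintro _ ⟨x, rfl⟩
    obtain ⟨x', hx'⟩ := exists_gt x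
    exact (hf.antitone.le_of_tendsto htop x').trans_lt (hf hx')
  · have hle : ∃ x, f x ≤ y := (htop.eventually_lt_const hy).exists.imp fun _ ↦ le_of_lt
    exact mem_range_of_exists_le_of_exists_ge hcont hle (hbot.eventually_ge_atTop y).exists

section QuadraticExtension

/-- The extension of `f : (0,∞) → ℝ` to the whole line by the quadratic polynomial
`p + q * s + r / 2 * s ^ 2`, which has value `p` and first two derivatives `q` and `r` at `0`.
It is `C²` when `f`, `f'`, `f''` tend to `p`, `q`, `r` at `0+`. -/
noncomputable def quadraticExtension (f : ℝ → ℝ) (p q r : ℝ) : ℝ → ℝ :=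
  (Ioi 0).piecewise f fun s ↦ p + q * s + r / 2 * s ^ 2

variable {f : ℝ → ℝ} {p q r : ℝ}

lemma quadraticExtension_of_pos {s : ℝ} (hs : 0 < s) : quadraticExtension f p q r s = f s :=
  piecewise_eq_of_mem _ _ _ hs

lemma quadraticExtension_zero : quadraticExtension f p q r 0 = p := by
  simp [quadraticExtension]

lemma deriv_quadratic (p q r : ℝ) :
    deriv (fun s ↦ p + q * s + r / 2 * s ^ 2) = fun s ↦ q + r * s := by
  refine deriv_eq fun s ↦ ?_
  have hquad := (((hasDerivAt_id s).const_mul q).const_add p).add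
    ((hasDerivAt_pow 2 s).const_mul (r / 2))
  refine hquad.congr_deriv ?_
  norm_num
  ring

lemma deriv_linear (q r : ℝ) : deriv (fun s ↦ q + r * s) = fun _ ↦ r :=
  deriv_eq fun s ↦ by simpa using ((hasDerivAt_id s).const_mul r).const_add q

lemma contDiff_quadraticExtension (hf : ContDiffOn ℝ 2 f (Ioi 0))
    (hp : Tendsto f (𝓝[>] 0) (𝓝 p)) (hq : Tendsto (deriv f) (𝓝[>] 0) (𝓝 q))
    (hr : Tendsto (deriv (deriv f)) (𝓝[>] 0) (𝓝 r)) :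
    ContDiff ℝ 2 (quadraticExtension f p q r) := by
  refine contDiff_piecewise_Ioi (n := 2) hf (by fun_prop) fun k hk ↦ ?_
  interval_cases k
  · simpa using hp
  · simpa [iteratedDeriv_one, deriv_quadratic] using hq
  · simpa [iteratedDeriv_succ', deriv_quadratic, deriv_linear] using hr

lemma deriv_quadraticExtension (hf : DifferentiableOn ℝ f (Ioi 0))
    (hp : Tendsto f (𝓝[>] 0) (𝓝 p)) (hq : Tendsto (deriv f) (𝓝[>] 0) (𝓝 q)) :
    deriv (quadraticExtension f p q r) = (Ioi 0).piecewise (deriv f) fun s ↦ q + r * s := by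
  rw [quadraticExtension, deriv_piecewise_Ioi hf (by fun_prop) (by simpa using hp)
    (by simpa [deriv_quadratic] using hq), deriv_quadratic]

lemma deriv_deriv_quadraticExtension (hf : ContDiffOn ℝ 2 f (Ioi 0))
    (hp : Tendsto f (𝓝[>] 0) (𝓝 p)) (hq : Tendsto (deriv f) (𝓝[>] 0) (𝓝 q))
    (hr : Tendsto (deriv (deriv f)) (𝓝[>] 0) (𝓝 r)) :
    deriv (deriv (quadraticExtension f p q r)) =
      (Ioi 0).piecewise (deriv (deriv f)) fun _ ↦ r := by
  have hf' : DifferentiableOn ℝ (deriv f) (Ioi 0) :=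
    ((contDiffOn_succ_iff_deriv_of_isOpen (n := 1) isOpen_Ioi).1 hf).2.2.differentiableOn
      one_ne_zero
  rw [deriv_quadraticExtension (hf.differentiableOn two_ne_zero) hp hq,
    deriv_piecewise_Ioi hf' (by fun_prop) (by simpa using hq) (by simpa [deriv_linear] using hr),
    deriv_linear]

lemma deriv_deriv_quadraticExtension_neg (hf : ContDiffOn ℝ 2 f (Ioi 0))
    (hp : Tendsto f (𝓝[>] 0) (𝓝 p)) (hq : Tendsto (deriv f) (𝓝[>] 0) (𝓝 q))
    (hr : Tendsto (deriv (deriv f)) (𝓝[>] 0) (𝓝 r)) (hneg : ∀ s > 0, deriv (deriv f) s < 0)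
    (hr_neg : r < 0) (s : ℝ) : deriv (deriv (quadraticExtension f p q r)) s < 0 := by
  rw [deriv_deriv_quadraticExtension hf hp hq hr]
  by_cases hs : s ∈ Ioi 0
  · simpa only [piecewise_eq_of_mem _ _ _ hs] using hneg s hs
  · simpa only [piecewise_eq_of_notMem _ _ _ hs] using hr_neg

lemma range_deriv_quadraticExtension {l : ℝ} (hf : ContDiffOn ℝ 2 f (Ioi 0))
    (hp : Tendsto f (𝓝[>] 0) (𝓝 p)) (hq : Tendsto (deriv f) (𝓝[>] 0) (𝓝 q))
    (hr : Tendsto (deriv (deriv f)) (𝓝[>] 0) (𝓝 r)) (hneg : ∀ s > 0, deriv (deriv f) s < 0)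
    (hr_neg : r < 0) (hl : Tendsto (fun s ↦ f s / s) atTop (𝓝 l)) :
    range (deriv (quadraticExtension f p q r)) = Ioi l := by
  have hderiv := deriv_quadraticExtension (r := r) (hf.differentiableOn two_ne_zero) hp hq
  have hconcave : ConcaveOn ℝ (Ioi 0) f :=
    (strictConcaveOn_of_deriv2_neg' (convex_Ioi 0) hf.continuousOn hneg).concaveOn
  have htop : Tendsto (deriv f) atTop (𝓝 l) :=
    tendsto_deriv_of_concaveOn_of_tendsto_div hconcave (hf.differentiableOn two_ne_zero) hl
  have hbot : Tendsto (fun s ↦ q + r * s) atBot atTop :=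
    tendsto_atTop_add_const_left _ q (tendsto_id.const_mul_atBot_of_neg hr_neg)
  refine range_eq_Ioi_of_strictAnti
    ((contDiff_quadraticExtension hf hp hq hr).continuous_deriv one_le_two)
    (strictAnti_of_deriv_neg (deriv_deriv_quadraticExtension_neg hf hp hq hr hneg hr_neg)) ?_ ?_
  · rw [hderiv]
    exact htop.congr' ((piecewise_eqOn _ _ _).symm.eventuallyEq_of_mem (Ioi_mem_atTop 0))
  · rw [hderiv]
    refine hbot.congr' ((piecewise_eqOn_compl _ _ _).symm.eventuallyEq_of_mem ?_)
    simpa only [compl_Ioi] using Iic_mem_atBot 0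

end QuadraticExtension

section Inverse

open Function

variable {𝕜 : Type*} [RCLike 𝕜] {f : 𝕜 → 𝕜}

lemma isOpenEmbedding_of_deriv_ne_zero (hf : ContDiff 𝕜 1 f) (hinj : Injective f)
    (hne : ∀ x, deriv f x ≠ 0) : IsOpenEmbedding f :=
  .of_continuous_injective_isOpenMap hf.continuous hinj <|
    isOpenMap_of_hasStrictDerivAt (fun _ ↦ hf.hasStrictDerivAt one_ne_zero) hne

lemma hasDerivAt_invFun (hf : ContDiff 𝕜 1 f) (hinj : Injective f) (hne : ∀ x, deriv f x ≠ 0)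
    (x : 𝕜) : HasDerivAt (invFun f) (deriv f x)⁻¹ (f x) := by
  have hemb := isOpenEmbedding_of_deriv_ne_zero hf hinj hne
  have hleft : invFun f (f x) = x := leftInverse_invFun hinj x
  have hcont : ContinuousAt (invFun f) (f x) := by
    rw [← hemb.continuousAt_iff, invFun_comp hinj]
    exact continuousAt_id
  refine HasDerivAt.of_local_left_inverse (f := f) hcont ?_ (hne x) ?_
  · rw [hleft]
    exact (hf.differentiable one_ne_zero x).hasDerivAt
  · filter_upwards [hemb.isOpen_range.mem_nhds (mem_range_self x)] with y hy using invFun_eq hy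

theorem contDiffOn_invFun {n : WithTop ℕ∞} (hn : 1 ≤ n) (hf : ContDiff 𝕜 n f)
    (hinj : Injective f) (hne : ∀ x, deriv f x ≠ 0) : ContDiffOn 𝕜 n (invFun f) (range f) := by
  have hemb := isOpenEmbedding_of_deriv_ne_zero (hf.of_le hn) hinj hne
  let e := hemb.toOpenPartialHomeomorph
  have heq : EqOn (invFun f) e.symm (range f) := by
    rintro _ ⟨x, rfl⟩
    rw [leftInverse_invFun hinj x, hemb.toOpenPartialHomeomorph_left_inv]
  refine ContDiffOn.congr (fun y hy ↦ ContDiffAt.contDiffWithinAt ?_) heq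
  exact e.contDiffAt_symm_deriv (hne _) (by simpa [e] using hy)
    ((hf.of_le hn).differentiable one_ne_zero _).hasDerivAt hf.contDiffAt

end Inverse

section LegendreDual

open Function

/-- The function `w ↦ sup_s (P s - w * s)` attached to a strictly concave differentiable `P`, so
that `P` is its concave conjugate `s ↦ inf_w (w * s + legendreDual P w)`. It is encoded through
the point `s = (P')⁻¹ w` where the supremum is attained, hence is only meaningful on the range
of `P'`. -/
noncomputable def legendreDual (P : ℝ → ℝ) (w : ℝ) : ℝ :=
  P (invFun (deriv P) w) - w * invFun (deriv P) w

variable {P : ℝ → ℝ} {w : ℝ}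

lemma legendreDual_deriv (hinj : Injective (deriv P)) (s : ℝ) :
    legendreDual P (deriv P s) = P s - deriv P s * s := by
  rw [legendreDual, leftInverse_invFun hinj s]

lemma le_mul_add_legendreDual (hP : ConcaveOn ℝ univ P) (hdiff : Differentiable ℝ P)
    (hw : w ∈ range (deriv P)) (s : ℝ) : P s ≤ w * s + legendreDual P w := by
  have htangent := le_add_deriv_mul_sub_of_concaveOn hP (mem_univ (invFun (deriv P) w))
    (mem_univ s) (hdiff _)
  rw [invFun_eq hw] at htangent
  rw [legendreDual]
  linarith

lemma hasDerivAt_legendreDual (hP : ContDiff ℝ 2 P) (hneg : ∀ s, deriv (deriv P) s < 0)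
    (hw : w ∈ range (deriv P)) : HasDerivAt (legendreDual P) (-invFun (deriv P) w) w := by
  obtain ⟨s, rfl⟩ := hw
  have hinj : Injective (deriv P) := (strictAnti_of_deriv_neg hneg).injective
  have hleft : invFun (deriv P) (deriv P s) = s := leftInverse_invFun hinj s
  have hinv := hasDerivAt_invFun hP.deriv' hinj (fun t ↦ (hneg t).ne) s
  have hPs : HasDerivAt P (deriv P s) (invFun (deriv P) (deriv P s)) := by
    rw [hleft]
    exact (hP.differentiable two_ne_zero s).hasDerivAt
  refine ((hPs.comp _ hinv).sub ((hasDerivAt_id _).mul hinv)).congr_deriv ?_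
  simp only [one_mul]
  ring

lemma eqOn_deriv_legendreDual (hP : ContDiff ℝ 2 P) (hneg : ∀ s, deriv (deriv P) s < 0) :
    EqOn (deriv (legendreDual P)) (-invFun (deriv P)) (range (deriv P)) :=
  fun _ hw ↦ (hasDerivAt_legendreDual hP hneg hw).deriv

lemma deriv_legendreDual_deriv (hP : ContDiff ℝ 2 P) (hneg : ∀ s, deriv (deriv P) s < 0)
    (s : ℝ) : deriv (legendreDual P) (deriv P s) = -s := by
  rw [eqOn_deriv_legendreDual hP hneg (mem_range_self s), Pi.neg_apply,
    leftInverse_invFun (strictAnti_of_deriv_neg hneg).injective s]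

lemma isOpen_range_deriv (hP : ContDiff ℝ 2 P) (hneg : ∀ s, deriv (deriv P) s < 0) :
    IsOpen (range (deriv P)) :=
  (isOpenEmbedding_of_deriv_ne_zero hP.deriv' (strictAnti_of_deriv_neg hneg).injective
    fun s ↦ (hneg s).ne).isOpen_range

lemma deriv_deriv_legendreDual_deriv (hP : ContDiff ℝ 2 P) (hneg : ∀ s, deriv (deriv P) s < 0)
    (s : ℝ) : deriv (deriv (legendreDual P)) (deriv P s) = -(deriv (deriv P) s)⁻¹ := by
  have heq := (eqOn_deriv_legendreDual hP hneg).eventuallyEq_of_mem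
    ((isOpen_range_deriv hP hneg).mem_nhds (mem_range_self s))
  rw [heq.deriv_eq]
  exact (hasDerivAt_invFun hP.deriv' (strictAnti_of_deriv_neg hneg).injective
    (fun t ↦ (hneg t).ne) s).neg.deriv

lemma contDiffOn_legendreDual {n : ℕ∞} (hn : 1 ≤ n) (hP : ContDiff ℝ (n + 1) P)
    (hneg : ∀ s, deriv (deriv P) s < 0) :
    ContDiffOn ℝ (n + 1) (legendreDual P) (range (deriv P)) := by
  have hP_two : ContDiff ℝ 2 P := by
    rw [← one_add_one_eq_two]
    exact hP.of_le (by gcongr; exact_mod_cast hn)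
  rw [contDiffOn_succ_iff_deriv_of_isOpen (isOpen_range_deriv hP_two hneg)]
  have hdiff : DifferentiableOn ℝ (legendreDual P) (range (deriv P)) := fun w hw ↦
    (hasDerivAt_legendreDual hP_two hneg hw).differentiableAt.differentiableWithinAt
  refine ⟨hdiff, by simp, ?_⟩
  exact (contDiffOn_invFun (mod_cast hn) hP.deriv' (strictAnti_of_deriv_neg hneg).injective
    fun s ↦ (hneg s).ne).neg.congr (eqOn_deriv_legendreDual hP_two hneg)

lemma strictConvexOn_legendreDual (hP : ContDiff ℝ 2 P) (hneg : ∀ s, deriv (deriv P) s < 0) :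
    StrictConvexOn ℝ (range (deriv P)) (legendreDual P) := by
  have hanti : StrictAnti (deriv P) := strictAnti_of_deriv_neg hneg
  have hconvex : Convex ℝ (range (deriv P)) :=
    (isPreconnected_range (hP.continuous_deriv one_le_two)).ordConnected.convex
  refine StrictMonoOn.strictConvexOn_of_deriv hconvex
    (fun w hw ↦ (hasDerivAt_legendreDual hP hneg hw).continuousAt.continuousWithinAt) ?_
  rw [(isOpen_range_deriv hP hneg).interior_eq]
  rintro _ ⟨s, rfl⟩ _ ⟨t, rfl⟩ hst
  rw [deriv_legendreDual_deriv hP hneg, deriv_legendreDual_deriv hP hneg]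
  exact neg_lt_neg (hanti.lt_iff_gt.1 hst)

lemma tendsto_deriv_legendreDual {a : ℝ} (hP : ContDiff ℝ 2 P)
    (hneg : ∀ s, deriv (deriv P) s < 0) (hrange : range (deriv P) = Ioi a) :
    Tendsto (deriv (legendreDual P)) (𝓝[>] a) atBot := by
  refine tendsto_atBot.2 fun b ↦ ?_
  have hb : a < deriv P (-b) := hrange.subset (mem_range_self _)
  filter_upwards [Ioo_mem_nhdsGT hb] with w hw
  obtain ⟨s, rfl⟩ : w ∈ range (deriv P) := hrange.superset hw.1
  rw [deriv_legendreDual_deriv hP hneg]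
  linarith [(strictAnti_of_deriv_neg hneg).lt_iff_gt.1 hw.2]

end LegendreDual

theorem stmt_14_general {Φ : ℝ → ℝ} {p q c l : ℝ} (hΦ : ContDiffOn ℝ 2 Φ (Ioi 0))
    (hneg : ∀ s > 0, deriv (deriv Φ) s < 0) (hp : Tendsto Φ (𝓝[>] 0) (𝓝 p))
    (hq : Tendsto (deriv Φ) (𝓝[>] 0) (𝓝 q)) (hc : Tendsto (deriv (deriv Φ)) (𝓝[>] 0) (𝓝 c))
    (hc_neg : c < 0) (hl : Tendsto (fun s ↦ Φ s / s) atTop (𝓝 l)) :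
    ∃ φ : ℝ → ℝ, ContDiffOn ℝ 2 φ (Ioi l) ∧ StrictConvexOn ℝ (Ioi l) φ ∧
      φ q = p ∧ deriv φ q = 0 ∧ 0 < deriv (deriv φ) q ∧ Tendsto (deriv φ) (𝓝[>] l) atBot ∧
      ∀ s > 0, Φ s = deriv Φ s * s + φ (deriv Φ s) ∧ ∀ w > l, Φ s ≤ w * s + φ w := by
  set P := quadraticExtension Φ p q c
  have hP : ContDiff ℝ 2 P := contDiff_quadraticExtension hΦ hp hq hc
  have hP_neg : ∀ s, deriv (deriv P) s < 0 :=
    deriv_deriv_quadraticExtension_neg hΦ hp hq hc hneg hc_neg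
  have hrange : range (deriv P) = Ioi l :=
    range_deriv_quadraticExtension hΦ hp hq hc hneg hc_neg hl
  have hanti : StrictAnti (deriv P) := strictAnti_of_deriv_neg hP_neg
  have hderiv := deriv_quadraticExtension (r := c) (hΦ.differentiableOn two_ne_zero) hp hq
  have hP_zero : P 0 = p := quadraticExtension_zero
  have hP_pos {s : ℝ} (hs : 0 < s) : P s = Φ s := quadraticExtension_of_pos hs
  have hderiv_zero : deriv P 0 = q := by simp [P, hderiv]
  have hderiv_pos {s : ℝ} (hs : 0 < s) : deriv P s = deriv Φ s := by simp [P, hderiv, hs]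
  refine ⟨legendreDual P, hrange ▸ contDiffOn_legendreDual le_rfl (by simpa) hP_neg,
    hrange ▸ strictConvexOn_legendreDual hP hP_neg, ?_, ?_, ?_,
    tendsto_deriv_legendreDual hP hP_neg hrange, fun s hs ↦ ⟨?_, fun w hw ↦ ?_⟩⟩
  · rw [← hderiv_zero, legendreDual_deriv hanti.injective, hP_zero, mul_zero, sub_zero]
  · rw [← hderiv_zero, deriv_legendreDual_deriv hP hP_neg, neg_zero]
  · rw [← hderiv_zero, deriv_deriv_legendreDual_deriv hP hP_neg]
    exact neg_pos.2 (inv_lt_zero.2 (hP_neg 0))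
  · rw [← hderiv_pos hs, legendreDual_deriv hanti.injective, hP_pos hs, add_sub_cancel]
  · rw [← hP_pos hs]
    exact le_mul_add_legendreDual
      (hanti.antitone.concaveOn_univ_of_deriv (hP.differentiable two_ne_zero))
      (hP.differentiable two_ne_zero) (hrange.superset hw) s

theorem stmt_14 (Φ : ℝ → ℝ) (hB : IsBernstein Φ)
    (hnz : ∃ s, 0 < s ∧ 0 < Φ s)
    (h0 : Filter.Tendsto Φ (𝓝[>] (0:ℝ)) (𝓝 0))
    (hd1 : Filter.Tendsto (deriv Φ) (𝓝[>] (0:ℝ)) (𝓝 1))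
    (c : ℝ) (hc : Filter.Tendsto (deriv (deriv Φ)) (𝓝[>] (0:ℝ)) (𝓝 c))
    (hlin : Filter.Tendsto (fun s => Φ s / s) Filter.atTop (𝓝 0)) :
    ∃ φ : ℝ → ℝ,
      ContDiffOn ℝ 2 φ (Set.Ioi 0) ∧
      StrictConvexOn ℝ (Set.Ioi 0) φ ∧
      φ 1 = 0 ∧ deriv φ 1 = 0 ∧ 0 < deriv (deriv φ) 1 ∧
      Filter.Tendsto (deriv φ) (𝓝[>] (0:ℝ)) Filter.atBot ∧
      ∀ s : ℝ, 0 < s →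
        Φ s = deriv Φ s * s + φ (deriv Φ s) ∧
        ∀ w : ℝ, 0 < w → Φ s ≤ w * s + φ w := by
  have hneg : ∀ s > 0, deriv (deriv Φ) s < 0 := fun s ↦ hB.deriv_deriv_neg hd1 hlin one_ne_zero
  have hc_neg : c < 0 := (hB.le_deriv_deriv_of_tendsto hc one_pos).trans_lt (hneg 1 one_pos)
  exact stmt_14_general (contDiffOn_infty.1 hB.1 2) hneg h0 hd1 hc hc_neg hlin
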